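/- arXiv:2111.12035 — 2 statements merged into one kernel-verified Lean document; each statement's English description precedes it below -/
import Mathlib

section
/- Let c > 0 and, for t > 0, let F_t denote the Borel measure on ℝ³ given by F_t = σ_{ct} / (4π c² t), where σ_R is the surface measure of the sphere of center 0 and radius R in ℝ³. Then for all t, t' > 0 the convolution F_t ∗ F_{t'} is absolutely continuous with respect to Lebesgue measure on ℝ³, with density h ↦ (1/(8π c² |h|)) · 1_{[c|t−t'|, c(t+t')]}(|h|); that is, for every Borel set A ⊆ ℝ³, (F_t ∗ F_{t'})(A) = ∫_A (1/(8π c² |h|)) 1_{[c|t−t'|, c(t+t')]}(|h|) dh. -/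
open MeasureTheory Real
open scoped MeasureTheory

/-- The surface measure on the unit sphere `S² ⊂ ℝ³` (total mass `4π`). -/
noncomputable def sphMeas : Measure (Metric.sphere (0 : EuclideanSpace ℝ (Fin 3)) 1) :=
  (volume : Measure (EuclideanSpace ℝ (Fin 3))).toSphere

/-- The surface measure `σ_R` of the sphere of center `0` and radius `R` in `ℝ³`
(total mass `4πR²`), viewed as a measure on `ℝ³`. -/
noncomputable def sphereSurf (R : ℝ) : Measure (EuclideanSpace ℝ (Fin 3)) :=
  ENNReal.ofReal (R ^ 2) •
    Measure.map (fun γ : Metric.sphere (0 : EuclideanSpace ℝ (Fin 3)) 1 =>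
      R • (γ : EuclideanSpace ℝ (Fin 3))) sphMeas

/-- The measure `F_t = σ_{ct} / (4π c² t)` on `ℝ³`, for `t > 0`. -/
noncomputable def Fmeas (c t : ℝ) : Measure (EuclideanSpace ℝ (Fin 3)) :=
  ENNReal.ofReal (1 / (4 * π * c ^ 2 * t)) • sphereSurf (c * t)

/-!
The characteristic function of `σ_R` at `ξ` is `4πR² sinc (R|ξ|)`: by Archimedes' hat-box theorem
the projection of the unit sphere of `ℝ³` to an axis is uniform on `[-1, 1]`. A density of the form
`C/|h| · 1_{[a, b]}(|h|)` is a superposition of spheres, so its characteristic function at `ξ` is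
`4πC ∫ r in a..b, r sinc (r|ξ|)`. The product-to-sum formula for `sin (R|ξ|) sin (R'|ξ|)` turns the
product of the characteristic functions of `σ_R` and `σ_R'` into such an integral, over the interval
`[|R - R'|, R + R']`, and a finite measure is determined by its characteristic function.
-/

section PolarCoordinates

open Set Metric Module Measure

variable {E F : Type*} [NormedAddCommGroup E] [NormedSpace ℝ E] [FiniteDimensional ℝ E]
  [Nontrivial E] [MeasurableSpace E] [BorelSpace E] [NormedAddCommGroup F] [NormedSpace ℝ F]

lemma integral_volumeIoiPow (n : ℕ) (g : ℝ → F) :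
    ∫ r : Ioi (0 : ℝ), g r ∂volumeIoiPow n = ∫ r in Ioi (0 : ℝ), r ^ n • g r := by
  rw [volumeIoiPow, integral_withDensity_eq_integral_toReal_smul (by fun_prop) (by simp),
    integral_subtype_comap measurableSet_Ioi fun r : ℝ ↦ (ENNReal.ofReal (r ^ n)).toReal • g r]
  refine setIntegral_congr_fun measurableSet_Ioi fun r hr ↦ ?_
  simp only [ENNReal.toReal_ofReal (pow_nonneg (mem_Ioi.1 hr).le n)]

theorem integral_eq_integral_Ioi_toSphere (μ : Measure E) [μ.IsAddHaarMeasure] {f : E → F}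
    (hf : Integrable f μ) :
    ∫ x, f x ∂μ =
      ∫ r in Ioi (0 : ℝ),
        r ^ (finrank ℝ E - 1) • ∫ γ : sphere (0 : E) 1, f (r • (γ : E)) ∂μ.toSphere := by
  have polar := μ.measurePreserving_homeomorphUnitSphereProd
  have polar_emb := (homeomorphUnitSphereProd E).measurableEmbedding
  let g : sphere (0 : E) 1 × Ioi (0 : ℝ) → F := fun p ↦ f ((p.2 : ℝ) • (p.1 : E))
  have f_eq : ∀ x : ({0}ᶜ : Set E), f x = g (homeomorphUnitSphereProd E x) := fun x ↦
    congrArg (fun y ↦ f (Subtype.val y)) ((homeomorphUnitSphereProd E).symm_apply_apply x).symm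
  have integrable_g : Integrable g (μ.toSphere.prod (volumeIoiPow (finrank ℝ E - 1))) := by
    rw [← polar.integrable_comp_emb polar_emb]
    refine Integrable.congr ?_ (.of_forall f_eq)
    exact (integrableOn_iff_comap_subtypeVal (measurableSet_singleton 0).compl).1 hf.integrableOn
  calc ∫ x, f x ∂μ = ∫ x : ({0}ᶜ : Set E), f x ∂μ.comap (↑) := by
        rw [integral_subtype_comap (measurableSet_singleton _).compl f, restrict_compl_singleton]
    _ = ∫ p, g p ∂μ.toSphere.prod (volumeIoiPow (finrank ℝ E - 1)) := by
        simp only [f_eq, polar.integral_comp polar_emb]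
    _ = _ := by
        rw [integral_prod_symm g integrable_g]
        exact integral_volumeIoiPow _ fun r ↦ ∫ γ : sphere (0 : E) 1, f (r • (γ : E)) ∂μ.toSphere

theorem setIntegral_ball_eq_integral_toSphere (μ : Measure E) [μ.IsAddHaarMeasure] {f : E → F}
    {R : ℝ} (hR : 0 ≤ R) (hf : IntegrableOn f (ball 0 R) μ) :
    ∫ x in ball 0 R, f x ∂μ =
      ∫ r in 0..R, r ^ (finrank ℝ E - 1) • ∫ γ : sphere (0 : E) 1, f (r • (γ : E)) ∂μ.toSphere := by
  rw [← integral_indicator measurableSet_ball,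
    integral_eq_integral_Ioi_toSphere μ (hf.integrable_indicator measurableSet_ball),
    intervalIntegral.integral_of_le hR, integral_Ioc_eq_integral_Ioo, ← Ioi_inter_Iio,
    ← setIntegral_indicator measurableSet_Iio]
  refine setIntegral_congr_fun measurableSet_Ioi fun r (hr : 0 < r) ↦ ?_
  have mem_ball_iff (γ : sphere (0 : E) 1) : r • (γ : E) ∈ ball 0 R ↔ r ∈ Iio R := by
    simp [norm_smul, abs_of_pos hr]
  by_cases h : r ∈ Iio R <;> simp [h, mem_ball_iff, indicator, -mem_ball, -mem_Iio]

end PolarCoordinates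

section Slicing

open Set Metric Module Submodule

variable {E F : Type*} [NormedAddCommGroup E] [InnerProductSpace ℝ E]
  [NormedAddCommGroup F] [NormedSpace ℝ F] {e : E}

lemma inner_smul_add_orthogonal (he : ‖e‖ = 1) (z : ℝ) (y : (ℝ ∙ e)ᗮ) :
    inner ℝ (z • e + (y : E)) e = z := by
  simp [inner_add_left, inner_smul_left, he, mem_orthogonal_singleton_iff_inner_left.1 y.2]

lemma smul_add_orthogonal_mem_ball_iff (he : ‖e‖ = 1) {R : ℝ} (hR : 0 ≤ R) (z : ℝ)
    (y : (ℝ ∙ e)ᗮ) : z • e + (y : E) ∈ ball 0 R ↔ y ∈ ball 0 √(R ^ 2 - z ^ 2) := by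
  have norm_sq_eq : ‖z • e + (y : E)‖ ^ 2 = z ^ 2 + ‖y‖ ^ 2 := by
    rw [norm_add_sq_real, inner_smul_left, mem_orthogonal_singleton_iff_inner_right.1 y.2]
    simp [norm_smul, he]
  rw [mem_ball_zero_iff, mem_ball_zero_iff, Real.lt_sqrt (norm_nonneg _),
    ← sq_lt_sq₀ (norm_nonneg _) hR, norm_sq_eq, lt_sub_iff_add_lt']

variable [FiniteDimensional ℝ E] [MeasurableSpace E] [BorelSpace E]

lemma measurePreserving_smul_add_orthogonal (he : ‖e‖ = 1) :
    MeasurePreserving (fun p : ℝ × (ℝ ∙ e)ᗮ ↦ p.1 • e + (p.2 : E)) (volume.prod volume) := by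
  have toSpan := (LinearIsometryEquiv.toSpanUnitSingleton e he).measurePreserving
  have decomposition := (ℝ ∙ e).orthogonalDecomposition.symm.measurePreserving
  have toLp := WithLp.volume_preserving_toLp (ℝ ∙ e) (ℝ ∙ e)ᗮ
  convert decomposition.comp (toLp.comp (toSpan.prod (.id volume))) using 2 with p
  simp

theorem map_inner_volume_restrict_ball (he : ‖e‖ = 1) {R : ℝ} (hR : 0 ≤ R) :
    (volume.restrict (ball 0 R)).map (fun x ↦ inner ℝ x e) =
      volume.withDensity fun z : ℝ ↦ volume (ball (0 : (ℝ ∙ e)ᗮ) √(R ^ 2 - z ^ 2)) := by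
  ext A hA
  have slicing := measurePreserving_smul_add_orthogonal he
  have hA' : MeasurableSet ((fun x : E ↦ inner ℝ x e) ⁻¹' A) := hA.preimage (by fun_prop)
  have hAR := hA'.inter (measurableSet_ball (x := (0 : E)) (ε := R))
  rw [Measure.map_apply (by fun_prop) hA, Measure.restrict_apply hA', withDensity_apply _ hA,
    ← slicing.measure_preimage hAR.nullMeasurableSet,
    Measure.prod_apply (hAR.preimage slicing.measurable), ← lintegral_indicator hA]
  refine lintegral_congr fun z ↦ ?_
  by_cases hz : z ∈ A
  · rw [indicator_of_mem hz]
    congr 1 with y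
    simp only [mem_preimage, mem_inter_iff, inner_smul_add_orthogonal he, hz, true_and,
      smul_add_orthogonal_mem_ball_iff he hR]
  · simp only [preimage_inter, preimage_preimage, inner_smul_add_orthogonal he, hz,
      not_false_eq_true, preimage_const_of_notMem, empty_inter, measure_empty, indicator_of_notMem]

lemma volume_ball_orthogonal_of_finrank_eq_three (hE : finrank ℝ E = 3) (he : ‖e‖ = 1) (r : ℝ) :
    volume (ball (0 : (ℝ ∙ e)ᗮ) √r) = ENNReal.ofReal (π * r) := by
  have finrank_orthogonal : finrank ℝ (ℝ ∙ e)ᗮ = 2 := by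
    have := Fact.mk hE
    exact finrank_orthogonal_span_singleton (n := 2) (norm_pos_iff.1 (he ▸ one_pos))
  have : Nontrivial (ℝ ∙ e)ᗮ := nontrivial_of_finrank_pos (R := ℝ) (by lia)
  rw [InnerProductSpace.volume_ball_of_dim_even (k := 1) finrank_orthogonal, finrank_orthogonal,
    ← ENNReal.ofReal_pow (sqrt_nonneg _), ENNReal.ofReal_mul pi_nonneg, mul_comm]
  rcases le_total 0 r with hr | hr
  · simp [sq_sqrt hr]
  · simp [sqrt_eq_zero_of_nonpos hr, ENNReal.ofReal_of_nonpos hr]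

theorem setIntegral_ball_inner (hE : finrank ℝ E = 3) (he : ‖e‖ = 1) {R : ℝ} (hR : 0 ≤ R)
    {f : ℝ → F} (hf : StronglyMeasurable f) :
    ∫ x in ball 0 R, f (inner ℝ x e) = π • ∫ z in -R..R, (R ^ 2 - z ^ 2) • f z := by
  have density_smul_eq (z : ℝ) : (ENNReal.ofReal (π * (R ^ 2 - z ^ 2))).toReal • f z =
      (Ioc (-R) R).indicator (fun z ↦ π • (R ^ 2 - z ^ 2) • f z) z := by
    by_cases hz : z ∈ Ioc (-R) R
    · have : 0 ≤ R ^ 2 - z ^ 2 := sub_nonneg.2 (sq_le_sq' hz.1.le hz.2)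
      rw [indicator_of_mem hz, ENNReal.toReal_ofReal (by positivity), mul_smul]
    · have : R ^ 2 - z ^ 2 ≤ 0 := by
        rw [mem_Ioc, not_and_or, not_lt, not_le] at hz
        rcases hz with hz | hz <;> nlinarith
      rw [indicator_of_notMem hz,
        ENNReal.ofReal_of_nonpos (mul_nonpos_of_nonneg_of_nonpos pi_nonneg this),
        ENNReal.toReal_zero, zero_smul]
  calc ∫ x in ball 0 R, f (inner ℝ x e)
      = ∫ z, f z ∂(volume.restrict (ball 0 R)).map fun x ↦ inner ℝ x e :=
        (integral_map (by fun_prop) hf.aestronglyMeasurable).symm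
    _ = ∫ z, (ENNReal.ofReal (π * (R ^ 2 - z ^ 2))).toReal • f z := by
        simp only [map_inner_volume_restrict_ball he hR,
          volume_ball_orthogonal_of_finrank_eq_three hE he]
        exact integral_withDensity_eq_integral_toReal_smul (by fun_prop) (by simp) f
    _ = π • ∫ z in -R..R, (R ^ 2 - z ^ 2) • f z := by
        simp only [density_smul_eq, integral_indicator measurableSet_Ioc, integral_smul,
          intervalIntegral.integral_of_le (neg_le_self hR)]

end Slicing

section HatBox

open Set Metric Module Filter

variable {E F : Type*} [NormedAddCommGroup E] [InnerProductSpace ℝ E] [FiniteDimensional ℝ E]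
  [MeasurableSpace E] [BorelSpace E] [NormedAddCommGroup F] [NormedSpace ℝ F] [CompleteSpace F]

lemma hasDerivAt_integral_neg_self {f : ℝ → F} (hf : Continuous f) (R : ℝ) :
    HasDerivAt (fun R ↦ ∫ z in -R..R, f z) (f R + f (-R)) R := by
  have integral_eq_sub (R : ℝ) : ∫ z in -R..R, f z = (∫ z in 0..R, f z) - ∫ z in 0..-R, f z :=
    (intervalIntegral.integral_interval_sub_left (hf.intervalIntegrable _ _)
      (hf.intervalIntegrable _ _)).symm
  have deriv_right := (hf.integral_hasStrictDerivAt 0 R).hasDerivAt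
  have deriv_left := (hf.integral_hasStrictDerivAt 0 (-R)).hasDerivAt.scomp R (hasDerivAt_neg R)
  simp only [integral_eq_sub]
  simpa using! deriv_right.fun_sub deriv_left

lemma hasDerivAt_integral_sq_sub_sq_smul {f : ℝ → F} (hf : Continuous f) (R : ℝ) :
    HasDerivAt (fun R ↦ ∫ z in -R..R, (R ^ 2 - z ^ 2) • f z) ((2 * R) • ∫ z in -R..R, f z) R := by
  have hf' : Continuous fun z ↦ z ^ 2 • f z := by fun_prop
  have integral_eq_sub (R : ℝ) : ∫ z in -R..R, (R ^ 2 - z ^ 2) • f z =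
      R ^ 2 • (∫ z in -R..R, f z) - ∫ z in -R..R, z ^ 2 • f z := by
    simp only [sub_smul]
    rw [intervalIntegral.integral_sub ((by fun_prop : Continuous _).intervalIntegrable _ _)
      (hf'.intervalIntegrable _ _), intervalIntegral.integral_smul]
  simp only [integral_eq_sub]
  convert ((hasDerivAt_pow 2 R).fun_smul (hasDerivAt_integral_neg_self hf R)).fun_sub
    (hasDerivAt_integral_neg_self hf' R) using 1
  simp only [neg_sq, smul_add, Nat.cast_ofNat, Nat.add_one_sub_one, pow_one]
  abel

/-- Archimedes' hat-box theorem: the integral of `f ⟪x, e⟫` over `ball 0 R` is computed in polar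
coordinates and by slices orthogonal to `e`, and the two values are differentiated at `R = 1`. -/
theorem integral_toSphere_inner (hE : finrank ℝ E = 3) {e : E} (he : ‖e‖ = 1) {f : ℝ → F}
    (hf : Continuous f) :
    ∫ γ : sphere (0 : E) 1, f (inner ℝ (γ : E) e) ∂volume.toSphere =
      (2 * π) • ∫ z in -1..1, f z := by
  have : Nontrivial E := nontrivial_of_finrank_pos (R := ℝ) (by lia)
  let Φ (r : ℝ) : F := ∫ γ : sphere (0 : E) 1, f (inner ℝ (r • (γ : E)) e) ∂volume.toSphere
  have continuous_Φ : Continuous Φ := by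
    have := continuous_parametric_integral_of_continuous (μ := (volume : Measure E).toSphere)
      (f := fun (r : ℝ) (γ : sphere (0 : E) 1) ↦ f (inner ℝ (r • (γ : E)) e)) (by fun_prop)
      isCompact_univ
    simpa only [Measure.restrict_univ] using this
  have polar_eq_slices {R : ℝ} (hR : 0 ≤ R) :
      ∫ r in 0..R, r ^ 2 • Φ r = π • ∫ z in -R..R, (R ^ 2 - z ^ 2) • f z := by
    have integrable : IntegrableOn (fun x : E ↦ f (inner ℝ x e)) (ball 0 R) :=
      ((hf.comp (by fun_prop)).continuousOn.integrableOn_compact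
        (isCompact_closedBall 0 R)).mono_set ball_subset_closedBall
    rw [← setIntegral_ball_inner hE he hR hf.stronglyMeasurable,
      setIntegral_ball_eq_integral_toSphere volume hR integrable, hE]
  have deriv_polar : HasDerivAt (fun R ↦ ∫ r in 0..R, r ^ 2 • Φ r) (Φ 1) 1 := by
    simpa using ((by fun_prop : Continuous fun r ↦ r ^ 2 • Φ r).integral_hasStrictDerivAt
      0 1).hasDerivAt
  have deriv_slices := (hasDerivAt_integral_sq_sub_sq_smul hf 1).const_smul π
  have eventually_eq : (fun R ↦ ∫ r in 0..R, r ^ 2 • Φ r) =ᶠ[nhds 1]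
      fun R ↦ π • ∫ z in -R..R, (R ^ 2 - z ^ 2) • f z :=
    (eventually_ge_nhds one_pos).mono fun R hR ↦ polar_eq_slices hR
  have := deriv_polar.unique (deriv_slices.congr_of_eventuallyEq eventually_eq)
  simpa [Φ, smul_smul, mul_comm] using this

end HatBox

section SphereCharFun

open Set Metric Module

variable {E : Type*} [NormedAddCommGroup E] [InnerProductSpace ℝ E] [FiniteDimensional ℝ E]
  [MeasurableSpace E] [BorelSpace E]

lemma integral_exp_mul_mul_I_eq_sinc (s : ℝ) :
    ∫ z in -1..1, Complex.exp ((s * z : ℝ) * Complex.I) = 2 * sinc s := by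
  rcases eq_or_ne s 0 with rfl | hs
  · norm_num
  · have hs' : (s : ℂ) ≠ 0 := Complex.ofReal_ne_zero.2 hs
    rw [intervalIntegral.integral_comp_mul_left (fun x : ℝ ↦ Complex.exp (x * Complex.I)) hs,
      mul_neg_one, mul_one, integral_exp_mul_I_eq_sinc, Complex.real_smul, Complex.ofReal_inv]
    field_simp

theorem integral_toSphere_exp_inner (hE : finrank ℝ E = 3) (r : ℝ) (ξ : E) :
    ∫ γ : sphere (0 : E) 1, Complex.exp (inner ℝ (r • (γ : E)) ξ * Complex.I) ∂volume.toSphere =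
      4 * π * sinc (r * ‖ξ‖) := by
  have : Nontrivial E := nontrivial_of_finrank_pos (R := ℝ) (by lia)
  obtain ⟨e, he, hξ⟩ : ∃ e : E, ‖e‖ = 1 ∧ ξ = ‖ξ‖ • e := by
    rcases eq_or_ne ξ 0 with rfl | hξ
    · obtain ⟨e, he⟩ := exists_norm_eq E zero_le_one
      exact ⟨e, he, by simp⟩
    · exact ⟨_, NormedSpace.norm_normalize hξ, (NormedSpace.norm_smul_normalize ξ).symm⟩
  have inner_eq (γ : E) : inner ℝ (r • γ) ξ = r * ‖ξ‖ * inner ℝ γ e := by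
    conv_lhs => rw [hξ]
    simp only [inner_smul_left, inner_smul_right, conj_trivial]
    ring
  simp only [inner_eq]
  rw [integral_toSphere_inner hE he
    (f := fun z : ℝ ↦ Complex.exp ((r * ‖ξ‖ * z : ℝ) * Complex.I)) (by fun_prop),
    integral_exp_mul_mul_I_eq_sinc, Complex.real_smul]
  push_cast
  ring


theorem charFun_withDensity_norm (hE : finrank ℝ E = 3) {g : ℝ → ℝ} (hg : ∀ r, 0 ≤ r → 0 ≤ g r)
    (hg_int : Integrable fun x : E ↦ g ‖x‖) (ξ : E) :
    charFun (volume.withDensity fun x : E ↦ ENNReal.ofReal (g ‖x‖)) ξ =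
      (4 * π * ∫ r in Ioi 0, r ^ 2 * g r * sinc (r * ‖ξ‖) : ℝ) := by
  have : Nontrivial E := nontrivial_of_finrank_pos (R := ℝ) (by lia)
  have integrable : Integrable fun x : E ↦ g ‖x‖ • Complex.exp (inner ℝ x ξ * Complex.I) :=
    hg_int.smul_bdd 1 (by fun_prop) (by simp [Complex.norm_exp_ofReal_mul_I])
  have sphere_integral_eq {r : ℝ} (hr : 0 < r) :
      r ^ 2 • ∫ γ : sphere (0 : E) 1, g ‖r • (γ : E)‖ •
        Complex.exp (inner ℝ (r • (γ : E)) ξ * Complex.I) ∂volume.toSphere =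
      (4 * π * (r ^ 2 * g r * sinc (r * ‖ξ‖)) : ℝ) := by
    have norm_eq (γ : sphere (0 : E) 1) : ‖r • (γ : E)‖ = r := by simp [norm_smul, abs_of_pos hr]
    simp only [norm_eq, integral_smul, integral_toSphere_exp_inner hE]
    simp only [Complex.real_smul]
    push_cast
    ring
  calc charFun (volume.withDensity fun x : E ↦ ENNReal.ofReal (g ‖x‖)) ξ
      = ∫ x : E, g ‖x‖ • Complex.exp (inner ℝ x ξ * Complex.I) := by
        rw [charFun_apply, integral_withDensity_eq_integral_toReal_smul₀
          hg_int.aemeasurable.ennreal_ofReal (by simp)]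
        simp only [ENNReal.toReal_ofReal (hg _ (norm_nonneg _))]
    _ = ∫ r in Ioi 0, ((4 * π * (r ^ 2 * g r * sinc (r * ‖ξ‖)) : ℝ) : ℂ) := by
        rw [integral_eq_integral_Ioi_toSphere volume integrable, hE]
        exact setIntegral_congr_fun measurableSet_Ioi fun r hr ↦ sphere_integral_eq hr
    _ = _ := by rw [integral_complex_ofReal, integral_const_mul]

lemma sq_mul_div_mul_indicator (C r : ℝ) (s : Set ℝ) :
    r ^ 2 * (C / r * s.indicator 1 r) = s.indicator (fun r ↦ C * r) r := by
  by_cases h : r ∈ s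
  · simp only [indicator_of_mem h, Pi.one_apply]
    rcases eq_or_ne r 0 with rfl | hr
    · simp
    · field_simp
  · simp only [indicator_of_notMem h, mul_zero]

lemma integrable_div_norm_mul_indicator (hE : finrank ℝ E = 3) (C a b : ℝ) :
    Integrable fun x : E ↦ C / ‖x‖ * (Icc a b).indicator 1 ‖x‖ := by
  have : Nontrivial E := nontrivial_of_finrank_pos (R := ℝ) (by lia)
  have integrable_mul : Integrable ((Icc a b).indicator fun r ↦ C * r) :=
    (integrable_indicator_iff measurableSet_Icc).2 (by fun_prop : Continuous _).integrableOn_Icc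
  rw [integrable_fun_norm_addHaar volume (f := fun r ↦ C / r * (Icc a b).indicator 1 r), hE]
  simpa only [smul_eq_mul, Nat.reduceSub, sq_mul_div_mul_indicator] using
    integrable_mul.integrableOn

theorem charFun_withDensity_div_norm_mul_indicator (hE : finrank ℝ E = 3) {C a b : ℝ} (hC : 0 ≤ C)
    (ha : 0 ≤ a) (hab : a ≤ b) (ξ : E) :
    charFun (volume.withDensity fun x : E ↦
        ENNReal.ofReal (C / ‖x‖ * (Icc a b).indicator 1 ‖x‖)) ξ =
      (4 * π * C * ∫ r in a..b, r * sinc (r * ‖ξ‖) : ℝ) := by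
  have density_nonneg (r : ℝ) (hr : 0 ≤ r) : 0 ≤ C / r * (Icc a b).indicator 1 r :=
    mul_nonneg (div_nonneg hC hr) (indicator_nonneg (fun _ _ ↦ zero_le_one) r)
  have integrand_eq (r : ℝ) :
      r ^ 2 * (C / r * (Icc a b).indicator 1 r) * sinc (r * ‖ξ‖) =
        (Icc a b).indicator (fun r ↦ C * (r * sinc (r * ‖ξ‖))) r := by
    rw [sq_mul_div_mul_indicator, ← indicator_mul_left _ _ fun r ↦ sinc (r * ‖ξ‖)]
    simp only [mul_assoc]
  have Ici_inter_Icc : Ici 0 ∩ Icc a b = Icc a b :=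
    inter_eq_right.2 fun r hr ↦ ha.trans hr.1
  rw [charFun_withDensity_norm (g := fun r ↦ C / r * (Icc a b).indicator 1 r) hE density_nonneg
    (integrable_div_norm_mul_indicator hE C a b), mul_assoc (4 * π), funext integrand_eq,
    ← integral_Ici_eq_integral_Ioi, setIntegral_indicator measurableSet_Icc, Ici_inter_Icc,
    integral_const_mul, integral_Icc_eq_integral_Ioc, intervalIntegral.integral_of_le hab]

end SphereCharFun

section Sinc

lemma self_mul_sinc (x : ℝ) : x * sinc x = sin x := by
  rcases eq_or_ne x 0 with rfl | hx
  · simp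
  · rw [sinc_of_ne_zero hx, mul_div_cancel₀ _ hx]

lemma sq_mul_integral_mul_sinc (a b ρ : ℝ) :
    ρ ^ 2 * ∫ r in a..b, r * sinc (r * ρ) = cos (a * ρ) - cos (b * ρ) := by
  have integrand_eq (r : ℝ) : ρ * (r * sinc (r * ρ)) = sin (r * ρ) := by
    rw [← self_mul_sinc]
    ring
  calc ρ ^ 2 * ∫ r in a..b, r * sinc (r * ρ) = ρ * ∫ r in a..b, sin (r * ρ) := by
        simp only [← integrand_eq, intervalIntegral.integral_const_mul]
        ring
    _ = cos (a * ρ) - cos (b * ρ) := by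
        rw [intervalIntegral.mul_integral_comp_mul_right, integral_sin]

theorem integral_mul_sinc_eq_mul_sinc_mul_sinc (R R' ρ : ℝ) :
    ∫ r in |R - R'|..R + R', r * sinc (r * ρ) =
      2 * (R * sinc (R * ρ)) * (R' * sinc (R' * ρ)) := by
  rcases eq_or_ne ρ 0 with rfl | hρ
  · simp only [mul_zero, sinc_zero, mul_one, integral_id, sq_abs]
    ring
  · have cos_abs_sub : cos (|R - R'| * ρ) = cos (R * ρ - R' * ρ) := by
      rw [← sub_mul, ← cos_abs, abs_mul, abs_abs, ← abs_mul, cos_abs]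
    have cos_sub_cos :
        cos (|R - R'| * ρ) - cos ((R + R') * ρ) = 2 * sin (R * ρ) * sin (R' * ρ) := by
      rw [cos_abs_sub, add_mul, cos_sub, cos_add]
      ring
    refine mul_left_cancel₀ (pow_ne_zero 2 hρ) ?_
    rw [sq_mul_integral_mul_sinc, cos_sub_cos, ← self_mul_sinc, ← self_mul_sinc (R' * ρ)]
    ring

end Sinc

section SurfaceMeasure

open Set

instance isFiniteMeasure_sphereSurf (R : ℝ) : IsFiniteMeasure (sphereSurf R) := by
  unfold sphereSurf sphMeas
  exact Measure.smul_finite _ ENNReal.ofReal_ne_top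

theorem charFun_sphereSurf (R : ℝ) (ξ : EuclideanSpace ℝ (Fin 3)) :
    charFun (sphereSurf R) ξ = (4 * π * R ^ 2 * sinc (R * ‖ξ‖) : ℝ) := by
  rw [charFun_apply, sphereSurf, integral_smul_measure, integral_map (by fun_prop) (by fun_prop),
    sphMeas, integral_toSphere_exp_inner (by simp), ENNReal.toReal_ofReal (sq_nonneg R),
    Complex.real_smul]
  push_cast
  ring

theorem sphereSurf_conv_sphereSurf {R R' : ℝ} (hR : 0 ≤ R) (hR' : 0 ≤ R') :
    sphereSurf R ∗ sphereSurf R' = volume.withDensity fun h ↦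
      ENNReal.ofReal (2 * π * R * R' / ‖h‖ * (Icc |R - R'| (R + R')).indicator 1 ‖h‖) := by
  have hE : Module.finrank ℝ (EuclideanSpace ℝ (Fin 3)) = 3 := by simp
  have abs_sub_le : |R - R'| ≤ R + R' := abs_sub_le_iff.2 ⟨by linarith, by linarith⟩
  have := isFiniteMeasure_withDensity_ofReal
    (integrable_div_norm_mul_indicator hE (2 * π * R * R') |R - R'| (R + R')).hasFiniteIntegral
  refine Measure.ext_of_charFun (funext fun ξ ↦ ?_)
  rw [charFun_conv, charFun_sphereSurf, charFun_sphereSurf, ← Complex.ofReal_mul,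
    charFun_withDensity_div_norm_mul_indicator hE (by positivity) (abs_nonneg _) abs_sub_le,
    integral_mul_sinc_eq_mul_sinc_mul_sinc]
  congr 1
  ring

end SurfaceMeasure

/-- the convolution `F_t ∗ F_{t'}` is absolutely continuous, with density
`h ↦ (1/(8πc²|h|)) 1_{[c|t−t'|, c(t+t')]}(|h|)`. -/
theorem stmt_6 (c : ℝ) (hc : 0 < c) (t t' : ℝ) (ht : 0 < t) (ht' : 0 < t') :
    ∀ A : Set (EuclideanSpace ℝ (Fin 3)), MeasurableSet A →
      (Fmeas c t ∗ Fmeas c t') A =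
        ∫⁻ h in A, ENNReal.ofReal ((1 / (8 * π * c ^ 2 * ‖h‖)) *
          Set.indicator (Set.Icc (c * |t - t'|) (c * (t + t'))) 1 ‖h‖) := by
  intro A hA
  have abs_sub_eq : |c * t - c * t'| = c * |t - t'| := by rw [← mul_sub, abs_mul, abs_of_pos hc]
  have coefficient_eq (ρ : ℝ) : 1 / (4 * π * c ^ 2 * t) * (1 / (4 * π * c ^ 2 * t') *
      (2 * π * (c * t) * (c * t') / ρ)) = 1 / (8 * π * c ^ 2 * ρ) := by
    field_simp
    norm_num
  rw [Fmeas, Fmeas, Measure.conv_smul_left, Measure.conv_smul_right,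
    sphereSurf_conv_sphereSurf (by positivity) (by positivity), abs_sub_eq, ← mul_add,
    Measure.smul_apply, Measure.smul_apply, withDensity_apply _ hA, smul_eq_mul, smul_eq_mul,
    ← lintegral_const_mul' _ _ ENNReal.ofReal_ne_top,
    ← lintegral_const_mul' _ _ ENNReal.ofReal_ne_top]
  refine lintegral_congr fun h ↦ ?_
  rw [← ENNReal.ofReal_mul (by positivity), ← ENNReal.ofReal_mul (by positivity),
    ← coefficient_eq]
  simp only [mul_assoc]
end

section
/- Let c > 0, R > 0, let k⁰ : [0,∞) × [0,∞) → ℝ be continuous, and let K(a,b) = ∫₀^a ∫₀^b k⁰(s,s') ds' ds. Then for all x, x' ∈ ℝ³ with x ≠ 0 and x' ≠ 0, writing r = |x| and r' = |x'|, and for all t, t' ∈ ℝ: (t t' / (16π²)) ∫_{S²} ∫_{S²} k⁰( |x − c|t|γ|², |x' − c|t'|γ'|² ) · 1_{[0,R]}(|x − c|t|γ|) · 1_{[0,R]}(|x' − c|t'|γ'|) dσ_{S²}(γ) dσ_{S²}(γ') = (sgn(t t') / (16 c² r r')) · Σ_{ε,ε' ∈ {−1,1}} ε ε' K( min((r + ε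 c|t|)², R²), min((r' + ε' c|t'|)², R²) ). -/
open MeasureTheory Real

/-!
By Archimedes' hat-box theorem, `γ ↦ ⟪e, γ⟫` pushes the surface measure of `S²` forward to `2π`
times Lebesgue measure on `[-1, 1]`. Since `‖x - ργ‖² = ‖x‖² + ρ² - 2ρ⟪x, γ⟫` is affine in
`⟪x, γ⟫`, the spherical mean of a function `f` of `‖x - ργ‖²` is a multiple of the integral of `f`
over `[(‖x‖ - ρ)², (‖x‖ + ρ)²]`, and the cutoff at `R` replaces each endpoint by its minimum with
`R²`. Doing this in both variables leaves the integral of `k₀` over a rectangle, whose expression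
through the primitive `K` is the signed sum over the four corners.
-/

section ZonalIntegrals

open Set
open scoped ENNReal Pointwise

lemma lintegral_Ioo_sin_mul_comp_cos (g : ℝ → ℝ≥0∞) :
    ∫⁻ θ in Ioo 0 π, ENNReal.ofReal (sin θ) * g (cos θ) = ∫⁻ u in Icc (-1) 1, g u := by
  rw [← bijOn_cos.image_eq, lintegral_image_eq_lintegral_deriv_mul_of_antitoneOn measurableSet_Icc
    (fun θ _ => (hasDerivAt_cos θ).hasDerivWithinAt) antitoneOn_cos,
    setLIntegral_congr Ioo_ae_eq_Icc]
  simp only [neg_neg]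

lemma lintegral_upperHalfPlane_eq_polar (f : ℝ × ℝ → ℝ≥0∞) :
    ∫⁻ p in univ ×ˢ Ioi 0, f p
      = ∫⁻ p in Ioi (0 : ℝ) ×ˢ Ioo 0 π,
          ENNReal.ofReal p.1 * f (p.1 * cos p.2, p.1 * sin p.2) := by
  let H : Set (ℝ × ℝ) := univ ×ˢ Ioi 0
  have hH : MeasurableSet H := .prod .univ measurableSet_Ioi
  have preimage_eq : polarCoord.symm ⁻¹' H ∩ polarCoord.target = Ioi 0 ×ˢ Ioo 0 π := by
    ext ⟨s, θ⟩
    simp only [H, polarCoord_target, polarCoord_symm_apply, mem_inter_iff, mem_preimage, mem_prod,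
      mem_univ, true_and, mem_Ioi, mem_Ioo]
    constructor
    · rintro ⟨hsin, hs, hθ⟩
      have sin_pos : 0 < sin θ := pos_of_mul_pos_right hsin hs.le
      exact ⟨hs, not_le.1 fun hθ' => sin_pos.not_ge
        (sin_nonpos_of_nonpos_of_neg_pi_le hθ' hθ.1.le), hθ.2⟩
    · rintro ⟨hs, hθ⟩
      exact ⟨mul_pos hs (sin_pos_of_pos_of_lt_pi hθ.1 hθ.2), hs, by linarith [pi_pos], hθ.2⟩
  have indicator_symm (p : ℝ × ℝ) :
      ENNReal.ofReal p.1 • H.indicator f (polarCoord.symm p)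
        = (polarCoord.symm ⁻¹' H).indicator
            (fun p => ENNReal.ofReal p.1 * f (p.1 * cos p.2, p.1 * sin p.2)) p := by
    simp only [indicator, mem_preimage, smul_eq_mul, mul_ite, mul_zero, polarCoord_symm_apply]
  rw [← lintegral_indicator hH, ← lintegral_comp_polarCoord_symm]
  simp only [indicator_symm]
  rw [setLIntegral_indicator (measurableSet_preimage (by fun_prop) hH), preimage_eq]

lemma lintegral_comp_sq_add_sq {g : ℝ → ℝ≥0∞} (hg : Measurable g) :
    ∫⁻ q : ℝ × ℝ, g (q.1 ^ 2 + q.2 ^ 2)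
      = ENNReal.ofReal (2 * π) * ∫⁻ ρ in Ioi (0 : ℝ), ENNReal.ofReal ρ * g (ρ ^ 2) := by
  have polar_sq (ρ θ : ℝ) : (ρ * cos θ) ^ 2 + (ρ * sin θ) ^ 2 = ρ ^ 2 := by
    linear_combination ρ ^ 2 * cos_sq_add_sin_sq θ
  rw [← lintegral_comp_polarCoord_symm, polarCoord_target, Measure.volume_eq_prod,
    setLIntegral_prod_symm _ (by fun_prop)]
  simp only [polarCoord_symm_apply, polar_sq, smul_eq_mul, lintegral_const,
    Measure.restrict_apply_univ, volume_Ioo]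
  rw [mul_comm, sub_neg_eq_add, two_mul]

lemma lintegral_axial_eq_cylindrical {F : ℝ × ℝ → ℝ≥0∞} (hF : Measurable F) :
    ∫⁻ y : EuclideanSpace ℝ (Fin 3), F (y 0, ‖y‖)
      = ENNReal.ofReal (2 * π) * ∫⁻ p in (univ : Set ℝ) ×ˢ Ioi (0 : ℝ),
          ENNReal.ofReal p.2 * F (p.1, √(p.1 ^ 2 + p.2 ^ 2)) := by
  have norm_eq (y : EuclideanSpace ℝ (Fin 3)) : ‖y‖ = √(y 0 ^ 2 + (y 1 ^ 2 + y 2 ^ 2)) := by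
    simp [EuclideanSpace.norm_eq, Fin.sum_univ_three, add_assoc]
  have coords_measurePreserving :
      MeasurePreserving (fun y : EuclideanSpace ℝ (Fin 3) => (y 0, y 1, y 2)) :=
    ((MeasurePreserving.id volume).prod (volume_preserving_finTwoArrow ℝ)).comp
      ((volume_preserving_piFinSuccAbove (fun _ : Fin 3 => ℝ) 0).comp
        (PiLp.volume_preserving_ofLp (Fin 3)))
  have hG : Measurable fun q : ℝ × ℝ × ℝ => F (q.1, √(q.1 ^ 2 + (q.2.1 ^ 2 + q.2.2 ^ 2))) := by
    fun_prop
  simp only [norm_eq]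
  rw [coords_measurePreserving.lintegral_comp hG, Measure.volume_eq_prod,
    lintegral_prod _ hG.aemeasurable, Measure.volume_eq_prod, setLIntegral_prod _ (by fun_prop),
    setLIntegral_univ, ← lintegral_const_mul _ (by fun_prop)]
  exact lintegral_congr fun z =>
    lintegral_comp_sq_add_sq (g := fun w => F (z, √(z ^ 2 + w))) (by fun_prop)

lemma lintegral_axial_eq_spherical {F : ℝ × ℝ → ℝ≥0∞} (hF : Measurable F) :
    ∫⁻ y : EuclideanSpace ℝ (Fin 3), F (y 0, ‖y‖)
      = ENNReal.ofReal (2 * π) * ∫⁻ s in Ioi (0 : ℝ),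
          ENNReal.ofReal (s ^ 2) * ∫⁻ u in Icc (-1) 1, F (s * u, s) := by
  rw [lintegral_axial_eq_cylindrical hF, lintegral_upperHalfPlane_eq_polar,
    Measure.volume_eq_prod, setLIntegral_prod _ (by fun_prop)]
  congr 1
  refine setLIntegral_congr_fun measurableSet_Ioi fun s (hs : 0 < s) => ?_
  rw [← lintegral_Ioo_sin_mul_comp_cos fun u => F (s * u, s),
    ← lintegral_const_mul _ (by fun_prop)]
  refine lintegral_congr fun θ => ?_
  have radius_eq : √((s * cos θ) ^ 2 + (s * sin θ) ^ 2) = s := by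
    rw [mul_pow, mul_pow, ← mul_add, cos_sq_add_sin_sq, mul_one, sqrt_sq hs.le]
  simp only [radius_eq, ENNReal.ofReal_mul hs.le, sq s, mul_assoc]

variable {E : Type*} [NormedAddCommGroup E] [InnerProductSpace ℝ E]

lemma exists_orthonormalBasis_apply_zero_eq [FiniteDimensional ℝ E] {n : ℕ} [NeZero n]
    (hn : Module.finrank ℝ E = n) {e : E} (he : ‖e‖ = 1) :
    ∃ b : OrthonormalBasis (Fin n) ℝ E, b 0 = e := by
  obtain ⟨b, hb⟩ := Orthonormal.exists_orthonormalBasis_extension_of_card_eq (𝕜 := ℝ)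
    (ι := Fin n) (by simpa using hn) (v := fun _ => e) (s := {0})
    ⟨fun _ => he, fun i j hij => absurd (Subsingleton.elim i j) hij⟩
  exact ⟨b, hb 0 rfl⟩

lemma Ioo_zero_one_smul_coe_image_preimage_inner (e : E) (S : Set ℝ) :
    Ioo (0 : ℝ) 1 • ((↑) '' ((fun γ : Metric.sphere (0 : E) 1 => inner ℝ e (γ : E)) ⁻¹' S))
      = {y : E | ‖y‖ ∈ Ioo 0 1 ∧ inner ℝ e y / ‖y‖ ∈ S} := by
  ext y
  constructor
  · rintro ⟨s, hs, _, ⟨γ, hγ, rfl⟩, rfl⟩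
    have norm_eq : ‖s • (γ : E)‖ = s := by simp [norm_smul, abs_of_pos hs.1]
    simp only [mem_ofPred_eq, norm_eq, inner_smul_right, mul_div_cancel_left₀ _ hs.1.ne']
    exact ⟨hs, hγ⟩
  · rintro ⟨hy, hyS⟩
    have hy₀ : ‖y‖ ≠ 0 := hy.1.ne'
    refine ⟨‖y‖, hy, ‖y‖⁻¹ • y, ⟨⟨‖y‖⁻¹ • y, by simp [norm_smul, hy₀]⟩, ?_, rfl⟩,
      smul_inv_smul₀ hy₀ y⟩
    simpa only [mem_preimage, inner_smul_right, ← div_eq_inv_mul] using hyS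

variable [FiniteDimensional ℝ E] [MeasurableSpace E] [BorelSpace E]

lemma lintegral_zonal_eq_spherical (hE : Module.finrank ℝ E = 3) {e : E} (he : ‖e‖ = 1)
    {F : ℝ × ℝ → ℝ≥0∞} (hF : Measurable F) :
    ∫⁻ y : E, F (inner ℝ e y, ‖y‖)
      = ENNReal.ofReal (2 * π) * ∫⁻ s in Ioi (0 : ℝ),
          ENNReal.ofReal (s ^ 2) * ∫⁻ u in Icc (-1) 1, F (s * u, s) := by
  obtain ⟨b, rfl⟩ := exists_orthonormalBasis_apply_zero_eq hE he
  rw [← lintegral_axial_eq_spherical hF, ← b.measurePreserving_repr.lintegral_comp (by fun_prop)]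
  simp only [OrthonormalBasis.repr_apply_apply, LinearIsometryEquiv.norm_map]

lemma lintegral_Ioo_zero_one_sq :
    ∫⁻ s in Ioo (0 : ℝ) 1, ENNReal.ofReal (s ^ 2) = ENNReal.ofReal (1 / 3) := by
  rw [setLIntegral_congr Ioo_ae_eq_Ioc, ← ofReal_integral_eq_lintegral_ofReal
    (intervalIntegral.intervalIntegrable_pow 2).1 (.of_forall fun s => sq_nonneg s),
    ← intervalIntegral.integral_of_le zero_le_one, integral_pow]
  norm_num

lemma volume_cone_inner (hE : Module.finrank ℝ E = 3) {e : E} (he : ‖e‖ = 1) {S : Set ℝ}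
    (hS : MeasurableSet S) :
    volume {y : E | ‖y‖ ∈ Ioo 0 1 ∧ inner ℝ e y / ‖y‖ ∈ S}
      = ENNReal.ofReal (2 * π / 3) * volume (S ∩ Icc (-1) 1) := by
  let C : Set (ℝ × ℝ) := {p | p.2 ∈ Ioo 0 1 ∧ p.1 / p.2 ∈ S}
  have hC : MeasurableSet C :=
    (measurable_snd measurableSet_Ioo).inter ((measurable_fst.div measurable_snd) hS)
  have slice (s : ℝ) (hs : s ∈ Ioi (0 : ℝ)) :
      ENNReal.ofReal (s ^ 2) * ∫⁻ u in Icc (-1) 1, C.indicator 1 (s * u, s)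
        = (Iio 1).indicator (fun s => ENNReal.ofReal (s ^ 2)) s * volume (S ∩ Icc (-1) 1) := by
    have mem_C (u : ℝ) : (s * u, s) ∈ C ↔ s < 1 ∧ u ∈ S := by
      simp [C, mem_Ioi.1 hs, (mem_Ioi.1 hs).ne']
    have indicator_C (u : ℝ) : C.indicator (1 : ℝ × ℝ → ℝ≥0∞) (s * u, s)
        = (Iio 1).indicator 1 s * S.indicator 1 u := by
      by_cases hs₁ : s < 1 <;> by_cases hu : u ∈ S <;> simp [indicator, mem_C, hs₁, hu]
    simp only [indicator_C]
    rw [lintegral_const_mul _ (measurable_one.indicator hS), lintegral_indicator_one hS,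
      Measure.restrict_apply hS, ← mul_assoc]
    simp only [indicator, Pi.one_apply, mul_ite, mul_one, mul_zero]
  calc volume {y : E | ‖y‖ ∈ Ioo 0 1 ∧ inner ℝ e y / ‖y‖ ∈ S}
      = ∫⁻ y : E, C.indicator 1 (inner ℝ e y, ‖y‖) :=
        (lintegral_indicator_one (hC.preimage (f := fun y : E => (inner ℝ e y, ‖y‖))
          (by fun_prop))).symm
    _ = ENNReal.ofReal (2 * π) * (ENNReal.ofReal (1 / 3) * volume (S ∩ Icc (-1) 1)) := by
        rw [lintegral_zonal_eq_spherical hE he (measurable_one.indicator hC),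
          setLIntegral_congr_fun measurableSet_Ioi slice,
          lintegral_mul_const _ (Measurable.indicator (by fun_prop) measurableSet_Iio),
          setLIntegral_indicator measurableSet_Iio, Iio_inter_Ioi, lintegral_Ioo_zero_one_sq]
    _ = ENNReal.ofReal (2 * π / 3) * volume (S ∩ Icc (-1) 1) := by
        rw [← mul_assoc, ← ENNReal.ofReal_mul (by positivity), mul_one_div]

/-- Archimedes' hat-box theorem. -/
theorem map_inner_toSphere_volume (hE : Module.finrank ℝ E = 3) {e : E} (he : ‖e‖ = 1) :
    (volume : Measure E).toSphere.map (fun γ : Metric.sphere (0 : E) 1 => inner ℝ e (γ : E))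
      = ENNReal.ofReal (2 * π) • volume.restrict (Icc (-1) 1) := by
  have inner_measurable : Measurable fun γ : Metric.sphere (0 : E) 1 => inner ℝ e (γ : E) := by
    fun_prop
  ext S hS
  rw [Measure.map_apply inner_measurable hS, Measure.toSphere_apply' _ (inner_measurable hS),
    Ioo_zero_one_smul_coe_image_preimage_inner, volume_cone_inner hE he hS, Measure.smul_apply,
    Measure.restrict_apply hS, smul_eq_mul, ← mul_assoc, hE, ← ENNReal.ofReal_natCast,
    ← ENNReal.ofReal_mul (by positivity)]
  congr 2
  push_cast
  ring

end ZonalIntegrals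

section SphericalMeans

open Set
open Metric (sphere)

lemma intervalIntegral_indicator_Iic {V : Type*} [NormedAddCommGroup V] [NormedSpace ℝ V]
    (f : ℝ → V) (a b M : ℝ) :
    ∫ s in a..b, (Iic M).indicator f s = ∫ s in min a M..min b M, f s := by
  wlog hab : a ≤ b generalizing a b
  · rw [intervalIntegral.integral_symm, this b a (le_of_not_ge hab),
      ← intervalIntegral.integral_symm]
  have Ioc_inter : Ioc a b ∩ Iic M = Ioc (min a M) (min b M) := by
    ext s
    simp only [mem_inter_iff, mem_Ioc, mem_Iic]
    grind
  rw [intervalIntegral.integral_of_le hab, setIntegral_indicator measurableSet_Iic, Ioc_inter,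
    intervalIntegral.integral_of_le (min_le_min_right M hab)]

lemma comp_sq_mul_indicator_Icc {α : Type*} [MulZeroOneClass α] (f : ℝ → α) {R v : ℝ}
    (hR : 0 ≤ R) (hv : 0 ≤ v) :
    f (v ^ 2) * (Icc 0 R).indicator 1 v = (Iic (R ^ 2)).indicator f (v ^ 2) := by
  have mem_iff : v ^ 2 ∈ Iic (R ^ 2) ↔ v ∈ Icc 0 R := by simp [pow_le_pow_iff_left₀ hv hR, hv]
  simp only [indicator, mem_iff, Pi.one_apply, mul_ite, mul_one, mul_zero]

variable {E : Type*} [NormedAddCommGroup E] [InnerProductSpace ℝ E] [FiniteDimensional ℝ E]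
  [MeasurableSpace E] [BorelSpace E]
  {V : Type*} [NormedAddCommGroup V] [NormedSpace ℝ V]

lemma integral_toSphere_comp_inner (hE : Module.finrank ℝ E = 3) {e : E} (he : ‖e‖ = 1)
    {f : ℝ → V} (hf : StronglyMeasurable f) :
    ∫ γ, f (inner ℝ e (γ : E)) ∂(volume : Measure E).toSphere
      = (2 * π) • ∫ u in (-1)..1, f u := by
  rw [← integral_map (φ := fun γ : sphere (0 : E) 1 => inner ℝ e (γ : E)) (f := f) (by fun_prop)
    hf.aestronglyMeasurable, map_inner_toSphere_volume hE he, integral_smul_measure,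
    ENNReal.toReal_ofReal (by positivity), integral_Icc_eq_integral_Ioc,
    intervalIntegral.integral_of_le (by norm_num)]

lemma integral_toSphere_comp_norm_sub_smul_sq (hE : Module.finrank ℝ E = 3) {x : E} (hx : x ≠ 0)
    {ρ : ℝ} (hρ : ρ ≠ 0) {f : ℝ → V} (hf : StronglyMeasurable f) :
    ∫ γ, f (‖x - ρ • (γ : E)‖ ^ 2) ∂(volume : Measure E).toSphere
      = (π / (ρ * ‖x‖)) • ∫ s in (‖x‖ - ρ) ^ 2..(‖x‖ + ρ) ^ 2, f s := by
  have hx' : ‖x‖ ≠ 0 := norm_ne_zero_iff.2 hx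
  have law_of_cosines (γ : sphere (0 : E) 1) : ‖x - ρ • (γ : E)‖ ^ 2
      = (‖x‖ ^ 2 + ρ ^ 2) - 2 * ρ * ‖x‖ * inner ℝ (‖x‖⁻¹ • x) (γ : E) := by
    rw [norm_sub_sq_real, norm_smul, norm_eq_of_mem_sphere, mul_one, norm_eq_abs, sq_abs,
      inner_smul_right, real_inner_smul_left]
    field_simp
    ring
  simp only [law_of_cosines]
  rw [integral_toSphere_comp_inner hE (e := ‖x‖⁻¹ • x) (by simp [norm_smul, hx'])
      (f := fun u => f ((‖x‖ ^ 2 + ρ ^ 2) - 2 * ρ * ‖x‖ * u))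
      (hf.comp_measurable (by fun_prop)),
    intervalIntegral.integral_comp_sub_mul f (by positivity), smul_smul]
  congr 1
  · field_simp
  · congr 1 <;> ring

lemma integral_toSphere_truncated (hE : Module.finrank ℝ E = 3) {x : E} (hx : x ≠ 0)
    {ρ : ℝ} (hρ : ρ ≠ 0) (M : ℝ) {f : ℝ → V} (hf : StronglyMeasurable f) :
    ∫ γ, (Iic M).indicator f (‖x - ρ • (γ : E)‖ ^ 2) ∂(volume : Measure E).toSphere
      = (π / (ρ * ‖x‖)) • ∫ s in min ((‖x‖ - ρ) ^ 2) M..min ((‖x‖ + ρ) ^ 2) M, f s := by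
  rw [integral_toSphere_comp_norm_sub_smul_sq hE hx hρ (hf.indicator measurableSet_Iic),
    intervalIntegral_indicator_Iic]

variable {E' : Type*} [NormedAddCommGroup E'] [InnerProductSpace ℝ E'] [FiniteDimensional ℝ E']
  [MeasurableSpace E'] [BorelSpace E']

lemma integral_toSphere_integral_toSphere_truncated (hE : Module.finrank ℝ E = 3)
    (hE' : Module.finrank ℝ E' = 3) {x : E} {x' : E'} (hx : x ≠ 0) (hx' : x' ≠ 0) {ρ ρ' : ℝ}
    (hρ : ρ ≠ 0) (hρ' : ρ' ≠ 0) {R R' : ℝ} (hR : 0 ≤ R) (hR' : 0 ≤ R') {k : ℝ → ℝ → ℝ}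
    (hk : StronglyMeasurable (Function.uncurry k)) :
    ∫ γ, ∫ γ', k (‖x - ρ • (γ : E)‖ ^ 2) (‖x' - ρ' • (γ' : E')‖ ^ 2)
        * (Icc 0 R).indicator 1 ‖x - ρ • (γ : E)‖ * (Icc 0 R').indicator 1 ‖x' - ρ' • (γ' : E')‖
        ∂(volume : Measure E').toSphere ∂(volume : Measure E).toSphere
      = π ^ 2 / (ρ * ρ' * ‖x‖ * ‖x'‖) *
        ∫ s in min ((‖x‖ - ρ) ^ 2) (R ^ 2)..min ((‖x‖ + ρ) ^ 2) (R ^ 2),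
          ∫ s' in min ((‖x'‖ - ρ') ^ 2) (R' ^ 2)..min ((‖x'‖ + ρ') ^ 2) (R' ^ 2), k s s' := by
  let g : ℝ → ℝ := fun s =>
    ∫ s' in min ((‖x'‖ - ρ') ^ 2) (R' ^ 2)..min ((‖x'‖ + ρ') ^ 2) (R' ^ 2), k s s'
  have hg : StronglyMeasurable g := hk.integral_prod_right'.sub hk.integral_prod_right'
  have inner_integral (γ : sphere (0 : E) 1) :
      ∫ γ', k (‖x - ρ • (γ : E)‖ ^ 2) (‖x' - ρ' • (γ' : E')‖ ^ 2)
          * (Icc 0 R).indicator 1 ‖x - ρ • (γ : E)‖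
          * (Icc 0 R').indicator 1 ‖x' - ρ' • (γ' : E')‖ ∂(volume : Measure E').toSphere
        = π / (ρ' * ‖x'‖) * (Iic (R ^ 2)).indicator g (‖x - ρ • (γ : E)‖ ^ 2) := by
    simp only [mul_right_comm _ ((Icc 0 R).indicator 1 ‖x - ρ • (γ : E)‖),
      comp_sq_mul_indicator_Icc (k _) hR' (norm_nonneg _), integral_mul_const]
    rw [integral_toSphere_truncated hE' hx' hρ' _ hk.of_uncurry_left, smul_eq_mul, mul_assoc,
      ← comp_sq_mul_indicator_Icc g hR (norm_nonneg _)]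
  simp only [inner_integral]
  rw [integral_const_mul, integral_toSphere_truncated hE hx hρ _ hg, smul_eq_mul, ← mul_assoc,
    div_mul_div_comm]
  congr 2 <;> ring

lemma sum_sign_mul_integral_integral {k : ℝ → ℝ → ℝ} (hk : Continuous (Function.uncurry k))
    (a b : ℝ → ℝ) :
    ∑ ε ∈ ({-1, 1} : Finset ℝ), ∑ ε' ∈ ({-1, 1} : Finset ℝ),
        ε * ε' * ∫ s in (0 : ℝ)..a ε, ∫ s' in (0 : ℝ)..b ε', k s s'
      = ∫ s in a (-1)..a 1, ∫ s' in b (-1)..b 1, k s s' := by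
  have slice_integrable (s u v : ℝ) : IntervalIntegrable (k s) volume u v :=
    (hk.comp (Continuous.prodMk_right s)).intervalIntegrable u v
  have integral_integrable (d u v : ℝ) :
      IntervalIntegrable (fun s => ∫ s' in (0 : ℝ)..d, k s s') volume u v :=
    Continuous.intervalIntegrable
      (intervalIntegral.continuous_parametric_intervalIntegral_of_continuous' hk 0 d) u v
  simp only [← intervalIntegral.integral_interval_sub_left (slice_integrable _ 0 (b 1))
    (slice_integrable _ 0 (b (-1)))]
  rw [intervalIntegral.integral_sub (integral_integrable _ _ _) (integral_integrable _ _ _),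
    ← intervalIntegral.integral_interval_sub_left (integral_integrable (b 1) 0 (a 1))
      (integral_integrable (b 1) 0 (a (-1))),
    ← intervalIntegral.integral_interval_sub_left (integral_integrable (b (-1)) 0 (a 1))
      (integral_integrable (b (-1)) 0 (a (-1)))]
  simp only [Finset.sum_pair (show (-1 : ℝ) ≠ 1 by norm_num)]
  ring

lemma real_sign_eq_div_abs (z : ℝ) : Real.sign z = z / |z| := by
  rcases lt_trichotomy z 0 with hz | rfl | hz
  · rw [Real.sign_of_neg hz, abs_of_neg hz, div_neg, div_self hz.ne]
  · simp
  · rw [Real.sign_of_pos hz, abs_of_pos hz, div_self hz.ne']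

lemma exists_continuous_eq_on_quadrant {X : Type*} [TopologicalSpace X] {k₀ : ℝ → ℝ → X}
    (hk₀ : ContinuousOn (Function.uncurry k₀) (Ici 0 ×ˢ Ici 0)) :
    ∃ k : ℝ → ℝ → X, Continuous (Function.uncurry k) ∧ ∀ s ≥ 0, ∀ s' ≥ 0, k₀ s s' = k s s' := by
  refine ⟨fun s s' => k₀ (max s 0) (max s' 0), ?_, fun s hs s' hs' => ?_⟩
  · exact hk₀.comp_continuous (f := fun p : ℝ × ℝ => (max p.1 0, max p.2 0)) (by fun_prop)
      fun p => mk_mem_prod (le_max_right p.1 0) (le_max_right p.2 0)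
  · simp only [max_eq_left hs, max_eq_left hs']

end SphericalMeans

theorem stmt_13_general {E E' : Type*} [NormedAddCommGroup E] [InnerProductSpace ℝ E]
    [FiniteDimensional ℝ E] [MeasurableSpace E] [BorelSpace E] [NormedAddCommGroup E']
    [InnerProductSpace ℝ E'] [FiniteDimensional ℝ E'] [MeasurableSpace E'] [BorelSpace E']
    (hE : Module.finrank ℝ E = 3) (hE' : Module.finrank ℝ E' = 3) {c : ℝ} (hc : c ≠ 0) {R : ℝ}
    (hR : 0 ≤ R) {k₀ : ℝ → ℝ → ℝ}
    (hk₀ : ContinuousOn (Function.uncurry k₀) (Set.Ici 0 ×ˢ Set.Ici 0)) {K : ℝ → ℝ → ℝ}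
    (hK : ∀ a b, K a b = ∫ s in (0 : ℝ)..a, ∫ s' in (0 : ℝ)..b, k₀ s s')
    {x : E} {x' : E'} (hx : x ≠ 0) (hx' : x' ≠ 0) (t t' : ℝ) :
    (t * t' / (16 * π ^ 2)) *
        ∫ γ, ∫ γ', k₀ (‖x - (c * |t|) • (γ : E)‖ ^ 2) (‖x' - (c * |t'|) • (γ' : E')‖ ^ 2)
          * (Set.Icc 0 R).indicator 1 ‖x - (c * |t|) • (γ : E)‖
          * (Set.Icc 0 R).indicator 1 ‖x' - (c * |t'|) • (γ' : E')‖
          ∂(volume : Measure E').toSphere ∂(volume : Measure E).toSphere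
      = (Real.sign (t * t') / (16 * c ^ 2 * ‖x‖ * ‖x'‖)) *
          ∑ ε ∈ ({-1, 1} : Finset ℝ), ∑ ε' ∈ ({-1, 1} : Finset ℝ),
            ε * ε' * K (min ((‖x‖ + ε * c * |t|) ^ 2) (R ^ 2))
              (min ((‖x'‖ + ε' * c * |t'|) ^ 2) (R ^ 2)) := by
  rcases eq_or_ne t 0 with rfl | ht
  · simp
  rcases eq_or_ne t' 0 with rfl | ht'
  · simp
  obtain ⟨k, hk, k_eq⟩ := exists_continuous_eq_on_quadrant hk₀
  have K_eq (u v : ℝ) : K (min (u ^ 2) (R ^ 2)) (min (v ^ 2) (R ^ 2))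
      = ∫ s in (0 : ℝ)..min (u ^ 2) (R ^ 2), ∫ s' in (0 : ℝ)..min (v ^ 2) (R ^ 2), k s s' := by
    rw [hK]
    refine intervalIntegral.integral_congr fun s hs =>
      intervalIntegral.integral_congr fun s' hs' => ?_
    rw [Set.uIcc_of_le (by positivity)] at hs hs'
    exact k_eq s hs.1 s' hs'.1
  simp only [k_eq _ (sq_nonneg _) _ (sq_nonneg _), K_eq]
  rw [integral_toSphere_integral_toSphere_truncated hE hE' hx hx' (by positivity) (by positivity)
    hR hR hk.stronglyMeasurable, sum_sign_mul_integral_integral hk, real_sign_eq_div_abs, abs_mul]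
  simp only [neg_mul, one_mul, ← sub_eq_add_neg]
  field_simp

/-- convolution-free formula for the double spherical mean of a truncated radially
symmetric kernel, in terms of `K(min(·, R²), min(·, R²))`. -/
theorem stmt_13 (c : ℝ) (hc : 0 < c) (R : ℝ) (hR : 0 < R) (k₀ : ℝ → ℝ → ℝ)
    (hk₀ : ContinuousOn (fun s : ℝ × ℝ => k₀ s.1 s.2) (Set.Ici 0 ×ˢ Set.Ici 0))
    (K : ℝ → ℝ → ℝ) (hK : ∀ a b, K a b = ∫ s in (0:ℝ)..a, ∫ s' in (0:ℝ)..b, k₀ s s')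
    (x x' : EuclideanSpace ℝ (Fin 3)) (hx : x ≠ 0) (hx' : x' ≠ 0) (t t' : ℝ) :
    (t * t' / (16 * π ^ 2)) *
        ∫ γ : Metric.sphere (0 : EuclideanSpace ℝ (Fin 3)) 1,
          (∫ γ' : Metric.sphere (0 : EuclideanSpace ℝ (Fin 3)) 1,
            k₀ (‖x - (c * |t|) • (γ : EuclideanSpace ℝ (Fin 3))‖ ^ 2)
               (‖x' - (c * |t'|) • (γ' : EuclideanSpace ℝ (Fin 3))‖ ^ 2)
            * Set.indicator (Set.Icc (0:ℝ) R) 1 ‖x - (c * |t|) • (γ : EuclideanSpace ℝ (Fin 3))‖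
            * Set.indicator (Set.Icc (0:ℝ) R) 1
                ‖x' - (c * |t'|) • (γ' : EuclideanSpace ℝ (Fin 3))‖ ∂sphMeas) ∂sphMeas
      = (Real.sign (t * t') / (16 * c ^ 2 * ‖x‖ * ‖x'‖)) *
          ∑ ε ∈ ({-1, 1} : Finset ℝ), ∑ ε' ∈ ({-1, 1} : Finset ℝ),
            ε * ε' * K (min ((‖x‖ + ε * c * |t|) ^ 2) (R ^ 2))
                       (min ((‖x'‖ + ε' * c * |t'|) ^ 2) (R ^ 2)) :=
  stmt_13_general finrank_euclideanSpace_fin finrank_euclideanSpace_fin hc.ne' hR.le hk₀ hK hx hx'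
    t t'
end
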